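/- arXiv:1307.2767 — 5 statements merged into one kernel-verified Lean document; each statement's English description precedes it below -/
import Mathlib

section
/- Let k ≥ 2, n ≥ 3, and m ≥ 1 be integers with k odd, 3 ∤ n, and 4 ∤ n. Then G(k,n,m)/F_n^{k+m-1} ≡ 1 (mod F_n). -/
/-- `G n m k` is the sequence from the paper: `G(1,n,m) = F_n^m`,
`G(k+1,n,m) = F_{n·G(k,n,m)}`. The value at `k = 0` is junk. -/
def G (n m : ℕ) : ℕ → ℕ
  | 0 => 1
  | 1 => Nat.fib n ^ m
  | (k+2) => Nat.fib (n * G n m (k+1))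

theorem fib_mod12 (t : ℕ) : Nat.fib t % 12 = Nat.fib (t % 24) % 12 := by
  induction t using Nat.strong_induction_on with
  | _ t ih =>
    by_cases h : t < 24
    · rw [Nat.mod_eq_of_lt h]
    · obtain ⟨s, rfl⟩ : ∃ s, t = s + 24 := ⟨t - 24, by omega⟩
      have h1 := ih s (by omega)
      have h2 := Nat.fib_add s 23
      have h3 : Nat.fib 23 = 28657 := by decide +kernel
      have h4 : Nat.fib (23 + 1) = 46368 := by decide +kernel
      rw [h3, h4] at h2
      rw [Nat.add_mod_right, ← h1]
      change Nat.fib (s + 23 + 1) % 12 = _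
      rw [h2]
      omega

theorem fib_good (t : ℕ) (h3 : ¬ 3 ∣ t) (h4 : ¬ 4 ∣ t) :
    ¬ 3 ∣ Nat.fib t ∧ Nat.fib t % 2 = 1 ∧ (t % 2 = 1 → Nat.fib t % 4 = 1) := by
  have h := fib_mod12 t
  have hlt : t % 24 < 24 := Nat.mod_lt _ (by norm_num)
  have key : ∀ r < 24, ¬ r % 3 = 0 → ¬ r % 4 = 0 →
    ¬ (Nat.fib r % 12) % 3 = 0 ∧ (Nat.fib r % 12) % 2 = 1 ∧
      (r % 2 = 1 → (Nat.fib r % 12) % 4 = 1) := by decide +kernel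
  have := key (t % 24) hlt (by omega) (by omega)
  rw [← h] at this
  refine ⟨by omega, by omega, fun h => ?_⟩
  have := this.2.2 (by omega)
  omega

theorem cassini (p : ℕ) :
    (Nat.fib p : ℤ) ^ 2 + Nat.fib p * Nat.fib (p + 1) - (Nat.fib (p + 1) : ℤ) ^ 2
      = (-1) ^ (p + 1) := by
  induction p with
  | zero => simp
  | succ p ih =>
    rw [Nat.fib_add_two, pow_succ (-1 : ℤ) (p + 1), ← ih]
    push_cast
    ring

theorem fib_expand (p N : ℕ) : ∀ r : ℕ, Nat.fib ((p + 1) * N + r) =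
    ∑ ij ∈ Finset.HasAntidiagonal.antidiagonal N,
      (N.choose ij.1) * (Nat.fib (p + 1) ^ ij.1 * Nat.fib p ^ ij.2 * Nat.fib (ij.1 + r)) := by
  induction N with
  | zero => intro r; simp
  | succ N ih =>
    intro r
    have e := Finset.sum_antidiagonal_choose_succ_mul (R := ℕ)
      (fun i j => Nat.fib (p + 1) ^ i * Nat.fib p ^ j * Nat.fib (i + r)) N
    simp only [Nat.cast_id] at e
    rw [e, show (p + 1) * (N + 1) + r = (p + 1) * N + (p + 1 + r) by ring, ih,
      ← Finset.sum_add_distrib]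
    refine Finset.sum_congr rfl fun ij hij => ?_
    have hs : N.choose ij.2 = N.choose ij.1 := by
      rw [Finset.HasAntidiagonal.mem_antidiagonal] at hij
      exact (Nat.choose_symm_of_eq_add (by omega)).symm
    rw [hs, show ij.1 + (p + 1 + r) = p + (ij.1 + r) + 1 by ring, Nat.fib_add,
      show ij.1 + 1 + r = ij.1 + r + 1 by ring]
    ring

theorem term_dvd (F N a j : ℕ) (hF : F % 2 = 1) (hN : N ≠ 0) (hd : F ^ a ∣ N) (hj : 2 ≤ j) :
    F ^ (a + 2) ∣ N.choose j * F ^ j := by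
  have hF0 : F ≠ 0 := by omega
  by_cases hc : N.choose j = 0
  · simp [hc]
  have hdvd : F ^ a ∣ j * N.choose j := by
    obtain ⟨M, rfl⟩ := Nat.exists_eq_succ_of_ne_zero hN
    obtain ⟨i, rfl⟩ : ∃ i, j = i + 1 := ⟨j - 1, by omega⟩
    have := Nat.add_one_mul_choose_eq M i
    rw [mul_comm, ← this]
    exact hd.mul_right _
  have hj0 : j ≠ 0 := by omega
  rw [← Nat.factorization_le_iff_dvd (pow_ne_zero _ hF0) (mul_ne_zero hj0 hc |> fun _ =>
    mul_ne_zero hc (pow_ne_zero _ hF0))]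
  rw [← Nat.factorization_le_iff_dvd (pow_ne_zero _ hF0) (mul_ne_zero hj0 hc)] at hdvd
  intro q
  have h1 := hdvd q
  rw [Nat.factorization_mul hj0 hc, Nat.factorization_pow] at h1
  rw [Nat.factorization_mul hc (pow_ne_zero _ hF0), Nat.factorization_pow, Nat.factorization_pow]
  simp only [Finsupp.add_apply, Finsupp.smul_apply, smul_eq_mul] at h1 ⊢
  by_cases hv : F.factorization q = 0
  · simp [hv]
  have hq : q.Prime := by
    by_contra h
    exact hv (Nat.factorization_eq_zero_of_not_prime _ h)
  have hqF : q ∣ F := Nat.dvd_of_factorization_pos hv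
  have hq3 : 3 ≤ q := by
    have := hq.two_le
    rcases this.eq_or_lt with h | h
    · subst h; omega
    · exact h
  have hvj : j.factorization q ≤ j - 2 := by
    by_contra h
    have h2 : q ^ (j - 1) ∣ j :=
      (pow_dvd_pow q (by omega)).trans (Nat.ordProj_dvd j q)
    have h3 := Nat.le_of_dvd (by omega) h2
    have h4 : 3 ^ (j - 1) ≤ q ^ (j - 1) := Nat.pow_le_pow_left hq3 _
    obtain ⟨i, rfl⟩ : ∃ i, j = i + 2 := ⟨j - 2, by omega⟩
    have h5 : i + 1 ≤ 3 ^ i := Nat.lt_pow_self (by norm_num)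
    have : 3 ^ (i + 2 - 1) = 3 * 3 ^ i := by
      rw [show i + 2 - 1 = i + 1 by omega]; ring
    omega
  obtain ⟨i, rfl⟩ : ∃ i, j = i + 2 := ⟨j - 2, by omega⟩
  have h6 : i ≤ i * F.factorization q := Nat.le_mul_of_pos_right _ (by omega)
  simp only [Nat.add_sub_cancel] at hvj
  nlinarith

theorem upow (p M : ℕ) (he : Even M) (h : Odd (p + 1) → 4 ∣ M) :
    (Nat.fib (p + 1) : ℤ) ∣ (Nat.fib p : ℤ) ^ M - 1 := by
  obtain ⟨t, rfl⟩ := he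
  have h1 : (Nat.fib p : ℤ) ^ 2 ≡ (-1) ^ (p + 1) [ZMOD Nat.fib (p + 1)] := by
    rw [Int.modEq_iff_dvd, ← cassini]
    exact ⟨Nat.fib p - Nat.fib (p + 1), by ring⟩
  have h2 := h1.pow t
  rw [← pow_mul, ← pow_mul] at h2
  have h3 : (-1 : ℤ) ^ ((p + 1) * t) = 1 := by
    apply Even.neg_one_pow
    rcases Nat.even_or_odd (p + 1) with h' | h'
    · exact h'.mul_right _
    · have := h h'
      exact Even.mul_left (by rw [Nat.even_iff]; omega) _
  rw [h3] at h2
  rw [← two_mul]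
  exact h2.symm.dvd

theorem step (p N a : ℕ) (hF : Nat.fib (p + 1) % 2 = 1) (hd : Nat.fib (p + 1) ^ a ∣ N)
    (hN : N % 2 = 1) (hN4 : (p + 1) % 2 = 1 → N % 4 = 1) :
    (Nat.fib (p + 1) : ℤ) ^ (a + 2) ∣ (Nat.fib ((p + 1) * N) : ℤ) - N * Nat.fib (p + 1) := by
  obtain ⟨M, rfl⟩ : ∃ M, N = M + 1 := ⟨N - 1, by omega⟩
  have e := fib_expand p (M + 1) 0
  rw [Finset.Nat.sum_antidiagonal_eq_sum_range_succ_mk, Finset.sum_range_succ',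
    Finset.sum_range_succ'] at e
  simp only [add_zero, zero_add, Nat.fib_zero, mul_zero, Nat.fib_one, mul_one, pow_one,
    Nat.choose_one_right, Nat.add_sub_cancel] at e
  have hs : Nat.fib (p + 1) ^ (a + 2) ∣ ∑ k ∈ Finset.range M, (M + 1).choose (k + 1 + 1) *
      (Nat.fib (p + 1) ^ (k + 1 + 1) * Nat.fib p ^ (M + 1 - (k + 1 + 1)) *
        Nat.fib (k + 1 + 1)) := by
    refine Finset.dvd_sum fun k _ => ?_
    have := term_dvd (Nat.fib (p + 1)) (M + 1) a (k + 1 + 1) hF (by omega) hd (by omega)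
    rw [mul_assoc (Nat.fib (p + 1) ^ (k + 1 + 1)), ← mul_assoc]
    exact this.mul_right _
  obtain ⟨s, hs⟩ := hs
  rw [hs] at e
  obtain ⟨w, hw⟩ := upow p M (by rw [Nat.even_iff]; omega)
    (fun h => by rw [Nat.odd_iff] at h; have := hN4 h; omega)
  obtain ⟨c, hc⟩ := hd
  have hc' : ((M + 1 : ℕ) : ℤ) = Nat.fib (p + 1) ^ a * c := by exact_mod_cast hc
  rw [e]
  refine ⟨s + c * w, ?_⟩
  push_cast at hc' ⊢
  have hw' : (Nat.fib p : ℤ) ^ M = 1 + Nat.fib (p + 1) * w := by linarith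
  rw [hw', hc']
  ring

theorem main_ind (p m : ℕ) (h3 : ¬ 3 ∣ p + 1) (h4 : ¬ 4 ∣ p + 1) (k : ℕ) :
    (¬ 3 ∣ G (p + 1) m (k + 1) ∧ G (p + 1) m (k + 1) % 2 = 1 ∧
      ((p + 1) % 2 = 1 → G (p + 1) m (k + 1) % 4 = 1)) ∧
    ∃ c : ℤ, (G (p + 1) m (k + 1) : ℤ) =
      (Nat.fib (p + 1) : ℤ) ^ (k + m) * (1 + Nat.fib (p + 1) * c) := by
  obtain ⟨g1, g2, g3⟩ := fib_good (p + 1) h3 h4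
  induction k with
  | zero =>
    have hG : G (p + 1) m (0 + 1) = Nat.fib (p + 1) ^ m := rfl
    rw [hG]
    refine ⟨⟨fun h => g1 (Nat.prime_three.dvd_of_dvd_pow h), ?_, fun h => ?_⟩, 0, by simp⟩
    · rw [Nat.pow_mod, g2]; simp
    · rw [Nat.pow_mod, g3 h]; simp
  | succ k ih =>
    have hG : G (p + 1) m (k + 1 + 1) = Nat.fib ((p + 1) * G (p + 1) m (k + 1)) := rfl
    rw [hG]
    set N := G (p + 1) m (k + 1)
    obtain ⟨⟨i1, i2, i3⟩, c, hc⟩ := ih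
    have hd : Nat.fib (p + 1) ^ (k + m) ∣ N := by
      have : ((Nat.fib (p + 1) ^ (k + m) : ℕ) : ℤ) ∣ (N : ℤ) := ⟨_, by push_cast; exact hc⟩
      exact_mod_cast this
    obtain ⟨w, hw⟩ := step p N (k + m) g2 hd i2 i3
    obtain ⟨j1, j2, j3⟩ := fib_good ((p + 1) * N)
      (fun h => (Nat.prime_three.dvd_mul.1 h).elim h3 i1)
      (fun h => h4 (Nat.Coprime.dvd_of_dvd_mul_right (k := 4) (n := N)
        (Nat.Coprime.pow_left 2 (m := 2) (Nat.coprime_two_left.2 (Nat.odd_iff.2 i2))) h))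
    refine ⟨⟨j1, j2, fun h => j3 (by rw [Nat.mul_mod, h, i2])⟩, c + w, ?_⟩
    rw [sub_eq_iff_eq_add.1 hw, hc]
    ring

theorem stmt_2 (k n m : ℕ) (hk : 2 ≤ k) (hn : 3 ≤ n) (hm : 1 ≤ m)
    (hko : Odd k) (h3 : ¬ (3 ∣ n)) (h4 : ¬ (4 ∣ n)) :
    G n m k / Nat.fib n ^ (k + m - 1) ≡ 1 [MOD Nat.fib n] := by
  obtain ⟨p, rfl⟩ : ∃ p, n = p + 1 := ⟨n - 1, by omega⟩
  obtain ⟨l, rfl⟩ : ∃ l, k = l + 1 := ⟨k - 1, by omega⟩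
  obtain ⟨-, c, hc⟩ := main_ind p m h3 h4 l
  have hF : 0 < Nat.fib (p + 1) := Nat.fib_pos.2 (by omega)
  rw [show l + 1 + m - 1 = l + m by omega, ← Int.natCast_modEq_iff]
  push_cast
  rw [hc, Int.mul_ediv_cancel_left _ (by positivity)]
  exact (Int.modEq_iff_dvd.2 ⟨c, by ring⟩ : (1 : ℤ) ≡ 1 + Nat.fib (p + 1) * c [ZMOD _]).symm
end

section
/- Let k ≥ 2, n ≥ 3, and m ≥ 1 be integers with 3 ∣ n, and assume either (k is odd and m ≥ 2) or (k is even and m = 1). Then G(k,n,m)/F_n^{k+m-1} ≡ (F_{n-3}/2)^{k-1} (mod F_n). (Note that 3 ∣ n implies 3 ∣ (n-3), hence F_{n-3} is even, so F_{n-3}/2 is an integer.) -/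
open Finset in
lemma fib_mul_sum (n N : ℕ) : Nat.fib ((n+1) * N) =
    ∑ j ∈ range (N+1), N.choose j * Nat.fib (n+1) ^ j * Nat.fib n ^ (N - j) * Nat.fib j := by
  have key : ((Nat.fib ((n+1) * N) : ℕ) : ℝ) = ((∑ j ∈ range (N+1), N.choose j *
      Nat.fib (n+1) ^ j * Nat.fib n ^ (N - j) * Nat.fib j : ℕ) : ℝ) := by
    rw [Real.coe_fib_eq, pow_mul, pow_mul, ← Real.goldenRatio_mul_fib_succ_add_fib,
      ← Real.goldenConj_mul_fib_succ_add_fib, add_pow, add_pow, ← Finset.sum_sub_distrib,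
      Finset.sum_div]
    push_cast
    apply Finset.sum_congr rfl
    intro j _
    rw [Real.coe_fib_eq j, mul_pow, mul_pow]
    ring
  exact_mod_cast key

lemma gcd_dvd_aux (j F r d : ℕ) (hj : 3 ≤ j) (h1 : d ∣ j) (h2 : d ∣ F ^ r) : d ∣ F ^ (j-2) := by
  rw [Nat.dvd_iff_prime_pow_dvd_dvd]
  intro p k hp hk
  rcases Nat.eq_zero_or_pos k with rfl | hk0
  · simp
  have hpF : p ∣ F := hp.dvd_of_dvd_pow (((dvd_pow_self p hk0.ne').trans hk).trans h2)
  have hle : p ^ k ≤ j := Nat.le_of_dvd (by omega) (hk.trans h1)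
  have hkj : k ≤ j - 2 := by
    by_contra hcon
    have h3 : 2 ^ (j-1) ≤ j := calc
      2 ^ (j-1) ≤ 2 ^ k := Nat.pow_le_pow_right (by norm_num) (by omega)
      _ ≤ p ^ k := Nat.pow_le_pow_left hp.two_le k
      _ ≤ j := hle
    obtain ⟨i, rfl⟩ : ∃ i, j = i + 3 := ⟨j - 3, by omega⟩
    have h4 : i < 2 ^ i := Nat.lt_two_pow_self
    have h5 : 2 ^ (i + 3 - 1) = 4 * 2 ^ i := by
      rw [show i + 3 - 1 = i + 2 by omega, pow_add]; ring
    omega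
  exact (pow_dvd_pow p hkj).trans (pow_dvd_pow_of_dvd hpF _)

lemma choose_dvd_aux (F r q j : ℕ) (hj : 3 ≤ j) :
    F ^ (r+2) ∣ (F ^ r * q).choose j * F ^ j := by
  have h1 : F ^ r ∣ (F ^ r * q).choose j * j := by
    obtain ⟨i, rfl⟩ : ∃ i, j = i + 1 := ⟨j - 1, by omega⟩
    rcases Nat.eq_zero_or_pos (F ^ r * q) with h0 | h0
    · rw [h0]; simp
    · obtain ⟨M, hM⟩ : ∃ M, F ^ r * q = M + 1 := ⟨F ^ r * q - 1, by omega⟩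
      have := Nat.add_one_mul_choose_eq M i
      rw [hM, ← this, ← hM]
      exact Dvd.dvd.mul_right (Dvd.intro _ rfl) _
  have h2 : F ^ r ∣ (F ^ r * q).choose j * Nat.gcd j (F ^ r) := by
    rw [← Nat.gcd_mul_left]
    exact Nat.dvd_gcd h1 (Dvd.intro_left _ rfl)
  have h3 := gcd_dvd_aux j F r _ hj (Nat.gcd_dvd_left j (F ^ r)) (Nat.gcd_dvd_right j (F ^ r))
  have h4 : F ^ r ∣ (F ^ r * q).choose j * F ^ (j-2) := h2.trans (Nat.mul_dvd_mul_left _ h3)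
  have h5 : F ^ j = F ^ (j-2) * F ^ 2 := by rw [← pow_add]; congr 1; omega
  rw [pow_add, h5, ← mul_assoc]
  exact Nat.mul_dvd_mul_right h4 _

/-- The key step. -/
lemma step_aux (n r q f N : ℕ) (hf : Nat.fib (n+1) = 2 * f) (hf0 : 0 < f) (hr : 1 ≤ r) (hq : 0 < q)
    (hN : N = Nat.fib (n+1) ^ r * q) (ha : Odd (Nat.fib n)) :
    ∃ q' : ℕ, 0 < q' ∧ Nat.fib ((n+1) * N) = Nat.fib (n+1) ^ (r+1) * q' ∧
      (q' : ℤ) ≡ q * ((Nat.fib n : ℤ) ^ (N - 1) + f) [ZMOD (Nat.fib (n+1))] := by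
  set F := Nat.fib (n+1) with hF
  set a := Nat.fib n with haa
  obtain ⟨t, ht⟩ : ∃ t, N = 2 * t + 2 := by
    have h2 : 2 ∣ N := by
      rw [hN]; exact Dvd.dvd.mul_right ((Dvd.intro _ hf.symm).trans (dvd_pow_self F (by omega))) _
    have h0 : 0 < N := by rw [hN]; have : 0 < F := by omega
                          positivity
    obtain ⟨u, hu⟩ := h2
    exact ⟨u - 1, by omega⟩
  have hsum := fib_mul_sum n N
  rw [← hF, ← haa] at hsum
  have hrest : F ^ (r+2) ∣ ∑ j ∈ Finset.range (2*t), N.choose (j+3) * F ^ (j+3)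
      * a ^ (N - (j+3)) * Nat.fib (j+3) := by
    apply Finset.dvd_sum
    intro j _
    have := choose_dvd_aux F r q (j+3) (by omega)
    rw [← hN] at this
    exact (this.mul_right _).mul_right _
  obtain ⟨R, hR⟩ := hrest
  have hsplit : Nat.fib ((n+1) * N) = F ^ (r+2) * R + N.choose 2 * F ^ 2 * a ^ (N-2)
      + N * F * a ^ (N-1) := by
    rw [hsum, ← hR, show N + 1 = 2 * t + 1 + 1 + 1 by omega, Finset.sum_range_succ',
      Finset.sum_range_succ', Finset.sum_range_succ']
    simp
  have hch : N.choose 2 * 2 = N * (N - 1) := by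
    rw [Nat.choose_two_right]
    exact Nat.div_mul_cancel (Nat.even_mul_pred_self N).two_dvd
  have hch2 : N.choose 2 * F ^ 2 = F ^ (r+1) * (q * f * (N-1)) := by
    calc N.choose 2 * F ^ 2 = (N.choose 2 * 2) * F * f := by rw [hf]; ring
      _ = F ^ (r+1) * (q * f * (N-1)) := by rw [hch]; nth_rewrite 1 [hN]; ring
  refine ⟨F * R + q * f * (N-1) * a ^ (N-2) + q * a ^ (N-1), ?_, ?_, ?_⟩
  · have : 0 < a := ha.pos
    positivity
  · rw [hsplit, hch2]
    have e : N * F * a ^ (N-1) = F ^ r * q * F * a ^ (N-1) := by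
      rw [← hN]
    rw [e]
    ring
  · obtain ⟨w, hw⟩ : Odd ((N-1) * a ^ (N-2)) := by
      apply Odd.mul _ ha.pow
      exact ⟨t, by omega⟩
    have : q * f * (N-1) * a ^ (N-2) = q * f * (2 * w + 1) := by rw [← hw]; ring
    rw [this, Int.modEq_iff_dvd]
    refine ⟨-(R + q * w), ?_⟩
    push_cast
    have hf' : (F : ℤ) = 2 * f := by exact_mod_cast hf
    rw [hf']
    ring

lemma cassini_aux (n : ℕ) : ((Nat.fib n : ℤ)) ^ 2 =
    Nat.fib (n+1) * (Nat.fib (n+1) - Nat.fib n) + (-1) ^ (n+1) := by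
  induction n with
  | zero => simp
  | succ n ih =>
    rw [Nat.fib_add_two]
    push_cast
    rw [pow_succ]
    linear_combination -ih

lemma sq_modEq (n : ℕ) : ((Nat.fib n : ℤ)) ^ 2 ≡ (-1) ^ (n+1) [ZMOD Nat.fib (n+1)] := by
  rw [cassini_aux, Int.modEq_iff_dvd]
  exact ⟨-(Nat.fib (n+1) - Nat.fib n), by ring⟩

lemma sign_aux (n f : ℕ) (hf : Nat.fib (n+1) = 2 * f) (x : ℤ) :
    (-1) ^ (n+1) * x + f ≡ (-1) ^ (n+1) * (x + f) [ZMOD Nat.fib (n+1)] := by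
  have hf' : (Nat.fib (n+1) : ℤ) = 2 * f := by exact_mod_cast hf
  rw [hf', Int.modEq_iff_dvd]
  rcases neg_one_pow_eq_or ℤ (n+1) with h | h <;> rw [h]
  · exact ⟨0, by ring⟩
  · exact ⟨-1, by ring⟩

lemma pow_four_aux (n N : ℕ) (h4 : 4 ∣ N) (h0 : 0 < N) :
    (Nat.fib n : ℤ) ^ (N-1) ≡ (-1) ^ (n+1) * Nat.fib n [ZMOD Nat.fib (n+1)] := by
  obtain ⟨u, rfl⟩ := h4
  obtain ⟨t, rfl⟩ : ∃ t, u = t + 1 := ⟨u - 1, by omega⟩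
  have h := ((sq_modEq n).pow (2*t+1)).mul_right (Nat.fib n : ℤ)
  rw [← pow_mul, ← pow_succ] at h
  rw [show 4 * (t+1) - 1 = 2 * (2*t+1) + 1 by omega]
  refine h.trans ?_
  rw [pow_succ ((-1 : ℤ) ^ (n+1)), pow_mul, ← pow_mul (-1 : ℤ),
    Even.neg_one_pow (Even.mul_left even_two _), one_pow, one_mul]

/-- First step for `m = 1`. -/
lemma pow_first_aux (n f : ℕ) (hf : Nat.fib (n+1) = 2 * f) (hf0 : 0 < f) (ha : Odd (Nat.fib n)) :
    (Nat.fib n : ℤ) ^ (Nat.fib (n+1) - 1) ≡ Nat.fib n [ZMOD Nat.fib (n+1)] := by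
  have key : ((-1 : ℤ) ^ (n+1)) ^ (f - 1) = 1 := by
    rcases neg_one_pow_eq_or ℤ (n+1) with h | h
    · rw [h]; simp
    · rw [h]
      apply Even.neg_one_pow
      by_contra hcon
      obtain ⟨g, hg⟩ : ∃ g, f = 2 * g := by
        rw [Nat.not_even_iff_odd] at hcon
        obtain ⟨g, hg⟩ := hcon
        exact ⟨g + 1, by omega⟩
      have hc := cassini_aux n
      rw [h, hf, hg] at hc
      obtain ⟨b, hb⟩ := ha
      rw [hb] at hc
      push_cast at hc
      have : (4 : ℤ) ∣ 2 := ⟨g * (2 * (2 * g) - (2 * b + 1)) - b ^ 2 - b, by linear_combination hc⟩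
      omega
  have h := ((sq_modEq n).pow (f-1)).mul_right (Nat.fib n : ℤ)
  rw [← pow_mul, ← pow_succ, key, one_mul] at h
  rwa [show Nat.fib (n+1) - 1 = 2 * (f-1) + 1 by omega]

lemma iter_aux (n m k e q f : ℕ) (x : ℤ) (hf : Nat.fib (n+1) = 2 * f) (hf0 : 0 < f)
    (ha : Odd (Nat.fib n)) (he : 2 ≤ e) (hq : 0 < q) (hG : G (n+1) m (k+1) = Nat.fib (n+1) ^ e * q)
    (hx : (q : ℤ) ≡ x [ZMOD Nat.fib (n+1)]) (j : ℕ) :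
    ∃ q' : ℕ, 0 < q' ∧ G (n+1) m (k+1+j) = Nat.fib (n+1) ^ (e+j) * q' ∧
      (q' : ℤ) ≡ x * ((-1) ^ (n+1) * (Nat.fib n + f)) ^ j [ZMOD Nat.fib (n+1)] := by
  induction j with
  | zero => exact ⟨q, hq, hG, by simpa using hx⟩
  | succ j ih =>
    obtain ⟨q', h1, h2, h3⟩ := ih
    obtain ⟨q'', g1, g2, g3⟩ := step_aux n (e+j) q' f _ hf hf0 (by omega) h1 rfl ha
    refine ⟨q'', g1, ?_, ?_⟩
    · rw [← h2] at g2
      rw [show k + 1 + (j+1) = (k + j) + 2 by omega, G, show k + j + 1 = k + 1 + j by omega, g2]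
      rfl
    · refine g3.trans ?_
      rw [pow_succ, ← mul_assoc]
      apply h3.mul
      have h4 : 4 ∣ Nat.fib (n+1) ^ (e+j) * q' := by
        apply Dvd.dvd.mul_right
        refine Dvd.dvd.trans ?_ (pow_dvd_pow _ (show 2 ≤ e + j by omega))
        exact ⟨f^2, by rw [hf]; ring⟩
      have h5 := pow_four_aux n _ h4 (by have : 0 < Nat.fib (n+1) := by omega
                                         positivity)
      exact (h5.add_right _).trans (sign_aux n f hf _)

theorem stmt_4 (k n m : ℕ) (hk : 2 ≤ k) (hn : 3 ≤ n) (hm : 1 ≤ m)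
    (h3 : 3 ∣ n) (h : (Odd k ∧ 2 ≤ m) ∨ (Even k ∧ m = 1)) :
    G n m k / Nat.fib n ^ (k + m - 1) ≡ (Nat.fib (n - 3) / 2) ^ (k - 1) [MOD Nat.fib n] := by
  obtain ⟨p, rfl⟩ : ∃ p, n = p + 2 + 1 := ⟨n - 3, by omega⟩
  obtain ⟨f, hf⟩ : 2 ∣ Nat.fib (p+2+1) := Nat.fib_dvd 3 _ h3
  have hFpos : 0 < Nat.fib (p+2+1) := Nat.fib_pos.2 (by omega)
  have hf0 : 0 < f := by omega
  have ha : Odd (Nat.fib (p+2)) := by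
    rw [← Nat.not_even_iff_odd]
    intro hev
    have h1 := Nat.fib_coprime_fib_succ (p+2)
    have h2 := Nat.dvd_gcd hev.two_dvd (Dvd.intro _ hf.symm)
    rw [h1] at h2
    omega
  have hcN : Nat.fib (p+2) = Nat.fib p / 2 + f := by
    have e1 := Nat.fib_add_two (n := p)
    have e2 := Nat.fib_add_two (n := p+1)
    rw [show p + 1 + 2 = p + 2 + 1 by ring, show p + 1 + 1 = p + 2 by ring] at e2
    omega
  have hc : (Nat.fib (p+2) : ℤ) + f ≡ ((Nat.fib p / 2 : ℕ) : ℤ) [ZMOD Nat.fib (p+2+1)] := by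
    rw [hcN, hf, Int.modEq_iff_dvd]
    exact ⟨-1, by push_cast; ring⟩
  have fin : ∃ q : ℕ, G (p+2+1) m k = Nat.fib (p+2+1) ^ (k+m-1) * q ∧
      (q : ℤ) ≡ ((Nat.fib (p+2) : ℤ) + f) ^ (k-1) [ZMOD Nat.fib (p+2+1)] := by
    rcases h with ⟨hk', hm'⟩ | ⟨hk', rfl⟩
    · obtain ⟨q, -, h2, h3⟩ := iter_aux (p+2) m 0 m 1 f 1 hf hf0 ha hm' one_pos
        (by simp [G]) (by simp) (k-1)
      refine ⟨q, ?_, ?_⟩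
      · rw [show 0 + 1 + (k-1) = k by omega] at h2
        rw [h2, show m + (k-1) = k + m - 1 by omega]
      · rw [mul_pow, ← pow_mul, Even.neg_one_pow, one_mul, one_mul] at h3
        · exact h3
        · exact Even.mul_left (by obtain ⟨u, rfl⟩ := hk'; simp) _
    · obtain ⟨q0, g1, g2, g3⟩ := step_aux (p+2) 1 1 f _ hf hf0 le_rfl one_pos rfl ha
      have g4 : (q0 : ℤ) ≡ Nat.fib (p+2) + f [ZMOD Nat.fib (p+2+1)] := by
        refine g3.trans ?_
        simp only [pow_one, mul_one, Nat.cast_one, one_mul]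
        exact (pow_first_aux (p+2) f hf hf0 ha).add_right _
      obtain ⟨q, -, h2, h3⟩ := iter_aux (p+2) 1 1 2 q0 f _ hf hf0 ha le_rfl g1
        (by rw [← g2]; simp [G]) g4 (k-2)
      refine ⟨q, ?_, ?_⟩
      · rw [show 1 + 1 + (k-2) = k by omega] at h2
        try rw [show 2 + (k-2) = k by omega] at h2
        rw [h2, Nat.add_sub_cancel]
      · rw [mul_pow, ← pow_mul, Even.neg_one_pow, one_mul, ← pow_succ',
          show k - 2 + 1 = k - 1 by omega] at h3
        · exact h3
        · exact Even.mul_left (by obtain ⟨u, rfl⟩ := hk'; exact ⟨u - 1, by omega⟩) _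
  obtain ⟨q, h1, h2⟩ := fin
  rw [h1, Nat.mul_div_cancel_left _ (by positivity), show p + 2 + 1 - 3 = p by omega,
    ← Int.natCast_modEq_iff]
  push_cast
  exact h2.trans (by simpa using hc.pow (k-1))
end

section
/- Let k ≥ 2, n ≥ 3, and m ≥ 1 be integers with 3 ∣ n, and assume either (k is even and m ≥ 2) or (k is odd and m = 1). Then G(k,n,m)/F_n^{k+m-1} ≡ (-1)^n · (F_{n-3}/2)^{k-1} (mod F_n), as a congruence of integers. (Note that 3 ∣ n implies 3 ∣ (n-3), hence F_{n-3} is even, so F_{n-3}/2 is an integer.) -/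
lemma fib_mul_expand (n N : ℕ) :
    Nat.fib ((n + 1) * N) = ∑ j ∈ Finset.range (N + 1),
      Nat.fib (n + 1) ^ j * Nat.fib n ^ (N - j) * N.choose j * Nat.fib j := by
  have h1 : Real.goldenRatio ^ (n + 1) =
      Nat.fib (n + 1) * Real.goldenRatio + Nat.fib n := by
    have := Real.goldenRatio_mul_fib_succ_add_fib n
    linarith
  have h2 : Real.goldenConj ^ (n + 1) =
      Nat.fib (n + 1) * Real.goldenConj + Nat.fib n := by
    have := Real.goldenConj_mul_fib_succ_add_fib n
    linarith
  have : ((Nat.fib ((n + 1) * N) : ℕ) : ℝ) = ((∑ j ∈ Finset.range (N + 1),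
      Nat.fib (n + 1) ^ j * Nat.fib n ^ (N - j) * N.choose j * Nat.fib j : ℕ) : ℝ) := by
    push_cast
    rw [Real.coe_fib_eq, pow_mul, pow_mul, h1, h2, add_pow, add_pow, ← Finset.sum_sub_distrib,
      Finset.sum_div]
    refine Finset.sum_congr rfl fun j _ => ?_
    rw [Real.coe_fib_eq j, mul_pow, mul_pow]
    generalize Real.goldenRatio = x
    generalize Real.goldenConj = y
    ring
  exact_mod_cast this

lemma dvd_term (F a N j : ℕ) (hF : 0 < F) (hj : 3 ≤ j) (hN : F ^ a ∣ N) :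
    F ^ (a + 2) ∣ F ^ j * N.choose j := by
  have h1 : F ^ a ∣ j * N.choose j := by
    obtain ⟨i, rfl⟩ : ∃ i, j = i + 1 := ⟨j - 1, by omega⟩
    rcases N with _ | M
    · simp
    · have := Nat.add_one_mul_choose_eq M i
      rw [mul_comm (i + 1), ← this]
      exact Dvd.dvd.mul_right hN _
  have h2 : F ^ a ∣ Nat.gcd (F ^ a) j * N.choose j := by
    rw [← Nat.gcd_mul_right]
    exact Nat.dvd_gcd (Dvd.intro _ rfl) h1
  have h3 : Nat.gcd (F ^ a) j ∣ F ^ (j - 2) := by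
    have hg : Nat.gcd (F ^ a) j ≠ 0 := Nat.gcd_ne_zero_right (by omega)
    rw [← Nat.factorization_prime_le_iff_dvd hg (by positivity)]
    intro p hp
    by_cases hpF : p ∣ F
    · have e1 : (Nat.gcd (F ^ a) j).factorization p ≤ j.factorization p :=
        (Nat.factorization_le_iff_dvd hg (by omega)).2 (Nat.gcd_dvd_right _ _) p
      have e2 : j.factorization p ≤ j - 2 := by
        by_contra hc
        push Not at hc
        have b1 : p ^ j.factorization p ≤ j := Nat.ordProj_le p (by omega)
        have b2 : 2 ^ (j - 1) ≤ p ^ j.factorization p :=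
          (Nat.pow_le_pow_left hp.two_le _).trans (Nat.pow_le_pow_right hp.pos (by omega))
        have b3 : ∀ i, i + 3 < 2 ^ (i + 2) := by
          intro i
          induction i with
          | zero => norm_num
          | succ i ih => rw [show i + 1 + 2 = (i + 2) + 1 from rfl, pow_succ]; omega
        have b4 := b3 (j - 3)
        rw [show j - 3 + 2 = j - 1 by omega] at b4
        omega
      have e3 : 1 ≤ F.factorization p := hp.factorization_pos_of_dvd hF.ne' hpF
      rw [Nat.factorization_pow]
      simp only [Finsupp.smul_apply, smul_eq_mul]
      nlinarith
    · rw [Nat.factorization_eq_zero_of_not_dvd]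
      · exact Nat.zero_le _
      · intro hd
        exact hpF (hp.dvd_of_dvd_pow (hd.trans (Nat.gcd_dvd_left _ _)))
  have h4 : F ^ a ∣ F ^ (j - 2) * N.choose j := h2.trans (Nat.mul_dvd_mul_right h3 _)
  have h5 : F ^ j = F ^ (j - 2) * F ^ 2 := by rw [← pow_add]; congr 1; omega
  rw [pow_add, h5, mul_right_comm]
  exact Nat.mul_dvd_mul_right h4 _

/-- The step. -/
lemma step_s5 (n a c h : ℕ) (ha : 1 ≤ a) (hc : 0 < c) (hh : Nat.fib (n + 1) = 2 * h)
    (hodd : Odd (Nat.fib n)) :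
    ∃ c' : ℕ, Nat.fib ((n + 1) * (Nat.fib (n + 1) ^ a * c)) = Nat.fib (n + 1) ^ (a + 1) * c' ∧
      (c' : ℤ) ≡ c * ((Nat.fib n : ℤ) ^ (Nat.fib (n + 1) ^ a * c - 1) + h)
        [ZMOD (Nat.fib (n + 1) : ℤ)] := by
  have hF : 0 < Nat.fib (n + 1) := Nat.fib_pos.2 (by omega)
  have hex := fib_mul_expand n (Nat.fib (n + 1) ^ a * c)
  generalize hFd : Nat.fib (n + 1) = F at *
  generalize hf : Nat.fib n = f at *
  obtain ⟨N, hNd⟩ : ∃ N, N = F ^ a * c := ⟨_, rfl⟩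
  have hFN : F ∣ N := by
    rw [hNd]; exact Dvd.dvd.mul_right (dvd_pow_self F (by omega)) _
  have hN0 : 0 < N := by rw [hNd]; positivity
  obtain ⟨M, hM⟩ : ∃ M, N = 2 * M + 2 := by
    have : 2 ∣ N := (Dvd.intro _ hh.symm).trans hFN
    obtain ⟨x, hx⟩ := this
    exact ⟨x - 1, by omega⟩
  rw [← hNd] at hex ⊢
  have hsplit : F ^ (a + 2) ∣ ∑ j ∈ Finset.range (2 * M),
      F ^ (j + 3) * f ^ (N - (j + 3)) * N.choose (j + 3) * Nat.fib (j + 3) := by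
    refine Finset.dvd_sum fun j _ => ?_
    have := dvd_term F a N (j + 3) hF (by omega) ⟨c, hNd⟩
    obtain ⟨x, hx⟩ := this
    refine ⟨x * f ^ (N - (j + 3)) * Nat.fib (j + 3), ?_⟩
    calc _ = (F ^ (j + 3) * N.choose (j + 3)) * f ^ (N - (j + 3)) * Nat.fib (j + 3) := by ring
      _ = _ := by rw [hx]; ring
  obtain ⟨R, hR⟩ := hsplit
  have hch : N.choose 2 = (M + 1) * (N - 1) := by
    rw [Nat.choose_two_right, hM, show 2 * M + 2 - 1 = 2 * M + 1 by omega,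
      show (2 * M + 2) * (2 * M + 1) = 2 * ((M + 1) * (2 * M + 1)) by ring]
    exact Nat.mul_div_cancel_left _ (by norm_num)
  have hex2 : Nat.fib ((n + 1) * N) =
      F ^ (a + 2) * R + F ^ 2 * f ^ (N - 2) * ((M + 1) * (N - 1)) + F * f ^ (N - 1) * N := by
    rw [hex, ← hch, ← hR, show N + 1 = 2 * M + 1 + 1 + 1 by omega, Finset.sum_range_succ',
      Finset.sum_range_succ', Finset.sum_range_succ']
    simp [Nat.fib_add_two]
  obtain ⟨t, ht⟩ : Odd (f ^ (N - 2) * (N - 1)) :=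
    Odd.mul hodd.pow ⟨M, by omega⟩
  have e2 : F ^ 2 * f ^ (N - 2) * ((M + 1) * (N - 1)) = F ^ (a + 1) * (c * h * (2 * t + 1)) := by
    rw [← ht]
    calc _ = F * h * (2 * M + 2) * (f ^ (N - 2) * (N - 1)) := by
            rw [pow_two]; nth_rewrite 2 [hh]; ring
      _ = _ := by rw [← hM]; nth_rewrite 1 [hNd]; ring
  refine ⟨F * R + c * h * (2 * t + 1) + f ^ (N - 1) * c, ?_, ?_⟩
  · rw [hex2, e2]
    have : F * f ^ (N - 1) * N = F ^ (a + 1) * (f ^ (N - 1) * c) := by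
      nth_rewrite 2 [hNd]; ring
    rw [this]; ring
  · symm
    rw [Int.modEq_iff_dvd]
    refine ⟨R + c * t, ?_⟩
    have hhz : (F : ℤ) = 2 * h := by exact_mod_cast hh
    push_cast
    rw [hhz]; ring

lemma cassini_s5 (n : ℕ) : (Nat.fib n : ℤ) ^ 2 ≡ (-1) ^ (n + 1) [ZMOD (Nat.fib (n + 1) : ℤ)] := by
  have key : (Nat.fib n : ℤ) ^ 2 + Nat.fib n * Nat.fib (n + 1) - (Nat.fib (n + 1) : ℤ) ^ 2
      = (-1) ^ (n + 1) := by
    induction n with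
    | zero => simp
    | succ n ih =>
      rw [pow_succ (-1 : ℤ) (n + 1), ← ih, show n + 1 + 1 = n + 2 from rfl, Nat.fib_add_two]
      push_cast; ring
  rw [Int.modEq_iff_dvd]
  exact ⟨Nat.fib n - Nat.fib (n + 1), by rw [← key]; ring⟩

lemma fib_mod_four (q : ℕ) : Nat.fib (6 * q + 3) % 4 = 2 := by
  induction q with
  | zero => decide
  | succ q ih =>
    have : Nat.fib (6 * (q + 1) + 3) = 8 * Nat.fib (6 * q + 4) + 5 * Nat.fib (6 * q + 3) := by
      have := Nat.fib_add (6 * q + 3) 5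
      rw [show 6 * q + 3 + 5 + 1 = 6 * (q + 1) + 3 by ring] at this
      rw [this, show Nat.fib 5 = 5 by decide, show Nat.fib (5 + 1) = 8 by decide]
      ring
    omega

/-- First kind of step: the exponent is divisible by four. -/
lemma step_four (n a c h h' : ℕ) (ha : 2 ≤ a) (hc : 0 < c) (hh : Nat.fib (n + 1) = 2 * h)
    (hh' : Nat.fib n = h + h') (hodd : Odd (Nat.fib n)) :
    ∃ c' : ℕ, Nat.fib ((n + 1) * (Nat.fib (n + 1) ^ a * c)) = Nat.fib (n + 1) ^ (a + 1) * c' ∧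
      (c' : ℤ) ≡ c * ((-1) ^ (n + 1) * h') [ZMOD (Nat.fib (n + 1) : ℤ)] := by
  obtain ⟨c', h1, h2⟩ := step_s5 n a c h (by omega) hc hh hodd
  refine ⟨c', h1, h2.trans (Int.ModEq.mul_left _ ?_)⟩
  have hF : 0 < Nat.fib (n + 1) := Nat.fib_pos.2 (by omega)
  obtain ⟨M, hM⟩ : ∃ M, Nat.fib (n + 1) ^ a * c = 4 * M + 4 := by
    have h4 : 4 ∣ Nat.fib (n + 1) ^ a * c := by
      refine Dvd.dvd.mul_right ((?_ : 4 ∣ Nat.fib (n + 1) ^ 2).trans (pow_dvd_pow _ ha)) _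
      rw [hh]; exact ⟨h ^ 2, by ring⟩
    have : 0 < Nat.fib (n + 1) ^ a * c := by positivity
    obtain ⟨x, hx⟩ := h4
    exact ⟨x - 1, by omega⟩
  rw [hM, show 4 * M + 4 - 1 = 2 * (2 * M + 1) + 1 by omega, pow_succ, pow_mul]
  have hp : ((Nat.fib n : ℤ) ^ 2) ^ (2 * M + 1) ≡ (-1) ^ (n + 1) [ZMOD (Nat.fib (n + 1) : ℤ)] := by
    refine ((cassini_s5 n).pow _).trans ?_
    rw [← pow_mul, mul_comm, pow_mul, pow_succ (-1 : ℤ) (2 * M), pow_mul]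
    simp
  refine ((hp.mul_right _).add_right _).trans ?_
  have hz : (Nat.fib (n + 1) : ℤ) = 2 * h := by exact_mod_cast hh
  have hz' : (Nat.fib n : ℤ) = h + h' := by exact_mod_cast hh'
  rw [hz, hz']
  rcases neg_one_pow_eq_or ℤ (n + 1) with e | e <;> rw [e, Int.modEq_iff_dvd]
  · exact ⟨-1, by ring⟩
  · exact ⟨0, by ring⟩

/-- Second kind of step: the first step for `m = 1`. -/
lemma step_one (n h h' : ℕ) (h3 : 3 ∣ n + 1) (hh : Nat.fib (n + 1) = 2 * h)
    (hh' : Nat.fib n = h + h') (hodd : Odd (Nat.fib n)) :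
    ∃ c' : ℕ, Nat.fib ((n + 1) * Nat.fib (n + 1)) = Nat.fib (n + 1) ^ 2 * c' ∧
      (c' : ℤ) ≡ h' [ZMOD (Nat.fib (n + 1) : ℤ)] := by
  obtain ⟨c', h1, h2⟩ := step_s5 n 1 1 h le_rfl one_pos hh hodd
  simp only [pow_one, mul_one, Nat.cast_one, one_mul] at h1 h2
  refine ⟨c', h1, h2.trans ?_⟩
  have hF : 0 < Nat.fib (n + 1) := Nat.fib_pos.2 (by omega)
  have hp : (Nat.fib n : ℤ) ^ (Nat.fib (n + 1) - 1) ≡ Nat.fib n [ZMOD (Nat.fib (n + 1) : ℤ)] := by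
    rw [show Nat.fib (n + 1) - 1 = 2 * (h - 1) + 1 by omega, pow_succ, pow_mul]
    have : ((Nat.fib n : ℤ) ^ 2) ^ (h - 1) ≡ 1 [ZMOD (Nat.fib (n + 1) : ℤ)] := by
      refine ((cassini_s5 n).pow _).trans ?_
      rw [← pow_mul]
      have : Even ((n + 1) * (h - 1)) := by
        rcases Nat.even_or_odd (n + 1) with e | e
        · exact e.mul_right _
        · refine Even.mul_left ?_ _
          obtain ⟨q, hq⟩ : ∃ q, n + 1 = 6 * q + 3 := by
            obtain ⟨x, hx⟩ := h3
            obtain ⟨y, hy⟩ := e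
            exact ⟨x / 2, by omega⟩
          have := fib_mod_four q
          rw [← hq] at this
          rw [Nat.even_iff]; omega
      rw [this.neg_one_pow]
    simpa using this.mul_right (Nat.fib n : ℤ)
  refine (hp.add_right _).trans ?_
  have hz : (Nat.fib (n + 1) : ℤ) = 2 * h := by exact_mod_cast hh
  have hz' : (Nat.fib n : ℤ) = h + h' := by exact_mod_cast hh'
  rw [hz, hz', Int.modEq_iff_dvd]
  exact ⟨-1, by ring⟩

lemma G_pos (n m : ℕ) (hn : 0 < n) (k : ℕ) : 0 < G n m k := by
  induction k with
  | zero => simp [G]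
  | succ k ih =>
    rcases k with _ | k
    · simp only [G]; exact pow_pos (Nat.fib_pos.2 hn) _
    · simp only [G]; exact Nat.fib_pos.2 (Nat.mul_pos hn ih)

lemma iter (n m h h' k0 a0 : ℕ) (c0 : ℕ) (hk0 : 1 ≤ k0) (ha0 : 2 ≤ a0)
    (hh : Nat.fib (n + 1) = 2 * h) (hh' : Nat.fib n = h + h') (hodd : Odd (Nat.fib n))
    (h0 : G (n + 1) m k0 = Nat.fib (n + 1) ^ a0 * c0) (i : ℕ) :
    ∃ c : ℕ, G (n + 1) m (k0 + i) = Nat.fib (n + 1) ^ (a0 + i) * c ∧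
      (c : ℤ) ≡ c0 * ((-1) ^ (n + 1) * h') ^ i [ZMOD (Nat.fib (n + 1) : ℤ)] := by
  induction i with
  | zero => exact ⟨c0, h0, by simp⟩
  | succ i ih =>
    obtain ⟨c, hc, hcm⟩ := ih
    have hpos : 0 < c := by
      have := G_pos (n + 1) m (by omega) (k0 + i)
      rw [hc] at this
      exact Nat.pos_of_mul_pos_left this
    obtain ⟨c', h1, h2⟩ := step_four n (a0 + i) c h h' (by omega) hpos hh hh' hodd
    refine ⟨c', ?_, ?_⟩
    · rw [← hc] at h1
      obtain ⟨k, hk⟩ : ∃ k, k0 + i = k + 1 := ⟨k0 + i - 1, by omega⟩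
      rw [← add_assoc, ← add_assoc, ← h1, hk]
      simp only [G]
    · refine h2.trans ?_
      rw [pow_succ (_ * _) i, ← mul_assoc (c0 : ℤ)]
      exact hcm.mul_right _

theorem stmt_5 (k n m : ℕ) (hk : 2 ≤ k) (hn : 3 ≤ n) (hm : 1 ≤ m)
    (h3 : 3 ∣ n) (h : (Even k ∧ 2 ≤ m) ∨ (Odd k ∧ m = 1)) :
    ((G n m k / Nat.fib n ^ (k + m - 1) : ℕ) : ℤ) ≡
      (-1) ^ n * ((Nat.fib (n - 3) / 2 : ℕ) : ℤ) ^ (k - 1) [ZMOD (Nat.fib n : ℤ)] := by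
  obtain ⟨t, rfl⟩ : ∃ t, n = t + 3 := ⟨n - 3, by omega⟩
  have h3t : 3 ∣ t := by omega
  rw [Nat.add_sub_cancel]
  obtain ⟨h', hh'⟩ : 2 ∣ Nat.fib t := by
    have := Nat.fib_dvd 3 t h3t
    simpa [show Nat.fib 3 = 2 by decide] using this
  have f2 : Nat.fib (t + 2) = Nat.fib t + Nat.fib (t + 1) := Nat.fib_add_two
  have f3 : Nat.fib (t + 3) = Nat.fib (t + 1) + Nat.fib (t + 2) := Nat.fib_add_two
  have hcop : Nat.Coprime (Nat.fib t) (Nat.fib (t + 1)) := Nat.fib_coprime_fib_succ t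
  have hodd1 : Odd (Nat.fib (t + 1)) := by
    rw [← Nat.not_even_iff_odd]
    intro he
    have := Nat.dvd_gcd ⟨h', hh'⟩ he.two_dvd
    rw [hcop] at this
    omega
  have hodd : Odd (Nat.fib (t + 2)) := by
    rw [f2, hh']; exact (even_two_mul _).add_odd hodd1
  have a1 : Nat.fib (t + 2 + 1) = 2 * (Nat.fib (t + 1) + h') := by
    rw [show t + 2 + 1 = t + 3 from rfl]; omega
  have a2 : Nat.fib (t + 2) = (Nat.fib (t + 1) + h') + h' := by omega
  have hF : 0 < Nat.fib (t + 3) := Nat.fib_pos.2 (by omega)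
  have hdiv : Nat.fib t / 2 = h' := by omega
  rw [hdiv]
  rcases h with ⟨hk2, hm2⟩ | ⟨hk2, rfl⟩
  · obtain ⟨c, hc, hcm⟩ := iter (t + 2) m _ h' 1 m 1 le_rfl hm2 a1 a2 hodd (by simp [G]) (k - 1)
    rw [show 1 + (k - 1) = k by omega, show m + (k - 1) = k + m - 1 by omega] at hc
    rw [show t + 2 + 1 = t + 3 from rfl] at *
    rw [hc, Nat.mul_div_cancel_left _ (by positivity)]
    refine hcm.trans ?_
    have ho : Odd (k - 1) := by
      obtain ⟨x, hx⟩ := hk2; exact ⟨x - 1, by omega⟩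
    rw [mul_pow, ← pow_mul, mul_comm (t + 3), pow_mul, ho.neg_one_pow]
    simp
  · obtain ⟨c0, b1, b2⟩ := step_one (t + 2) _ h' h3 a1 a2 hodd
    obtain ⟨c, hc, hcm⟩ := iter (t + 2) 1 _ h' 2 2 c0 (by norm_num) le_rfl a1 a2 hodd
      (by simpa [G] using b1) (k - 2)
    rw [show 2 + (k - 2) = k by omega] at hc
    rw [show t + 2 + 1 = t + 3 from rfl] at *
    rw [show k + 1 - 1 = k by omega, hc, Nat.mul_div_cancel_left _ (by positivity)]
    refine hcm.trans ((b2.mul_right _).trans ?_)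
    have ho : Odd (k - 2) := by
      obtain ⟨x, hx⟩ := hk2; exact ⟨x - 1, by omega⟩
    rw [mul_pow, ← pow_mul, mul_comm (t + 3), pow_mul, ho.neg_one_pow,
      show k - 1 = (k - 2) + 1 by omega, pow_succ (h' : ℤ)]
    have e : (h' : ℤ) * ((-1) ^ (t + 3) * (h' : ℤ) ^ (k - 2)) =
        (-1) ^ (t + 3) * ((h' : ℤ) ^ (k - 2) * h') := by ring
    rw [e]
end

section
/- For every integer n ≥ 3, set r = F_{n·F_{n·F_n}}/F_n^3 (an integer since F_n^3 divides F_{n·F_{n·F_n}}). Then: if 3 ∤ n and 4 ∤ n, r ≡ 1 (mod F_n); if 3 ∤ n and 4 ∣ n, r ≡ F_{n-1} (mod F_n); and if 3 ∣ n, r ≡ (-1)^n · (F_{n-3}/2)^2 (mod F_n), as a congruence of integers. -/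
theorem aux_expand (n : ℕ) (f a : ℤ) (hf : f = Nat.fib n) (ha : (Nat.fib (n+1) : ℤ) = f + a) (k : ℕ) :
    ∃ u v : ℤ, (Nat.fib (n * (k+3)) : ℤ) = a^k * (((k:ℤ)+3) * f * a^2 + ((k+3).choose 2 : ℕ) * f^2 * a
        + 2 * ((k+3).choose 3 : ℕ) * f^3) + f^4 * u ∧
      (Nat.fib (n * (k+3) + 1) : ℤ) = (Nat.fib (n * (k+3)) : ℤ) +
        a^k * (a^3 + ((k+3).choose 2 : ℕ) * f^2 * a + ((k+3).choose 3 : ℕ) * f^3) + f^4 * v := by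
  have rec2 : ∀ j : ℕ, (Nat.fib (n * (j+1) + 1) : ℤ) = Nat.fib (n*j) * f + Nat.fib (n*j+1) * (f + a) := by
    intro j
    have := Nat.fib_add (n*j) n
    rw [show n * (j+1) + 1 = n * j + n + 1 by ring, this]
    push_cast
    rw [ha, hf]
  have rec1 : ∀ j : ℕ, (Nat.fib (n * (j+1)) : ℤ) = Nat.fib (n*j) * a + Nat.fib (n*j+1) * f := by
    intro j
    have h1 := Nat.fib_add (n*j) (n+1)
    have h2 := Nat.fib_add (n*j) n
    have h3 : Nat.fib (n*j+n+2) = _ := Nat.fib_add_two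
    rw [show n * j + (n+1) + 1 = n*j+n+2 by ring] at h1
    have h4 : Nat.fib (n+2) = _ := Nat.fib_add_two
    rw [show n + 1 + 1 = n+2 by ring] at h1
    rw [show n * (j+1) = n * j + n by ring]
    zify at h1 h2 h3 h4
    rw [ha, ← hf] at *
    rw [h1, h2, h4] at h3
    linear_combination -h3
  induction k with
  | zero =>
    have a0 := rec1 0
    have a1 := rec1 1
    have a2 := rec1 2
    have b0 := rec2 0
    have b1 := rec2 1
    have b2 := rec2 2
    simp only [zero_add, mul_zero, Nat.fib_zero, Nat.fib_one, Nat.reduceAdd] at a0 a1 a2 b0 b1 b2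
    refine ⟨0, 0, ?_, ?_⟩
    · simp only [zero_add]
      rw [a2, a1, b1, a0, b0]; simp [Nat.choose]; ring
    · simp only [zero_add]
      rw [b2, a2, a1, b1, a0, b0]; simp [Nat.choose]; ring
  | succ k ih =>
    obtain ⟨u, v, h1, h2⟩ := ih
    have c2 : (k+1+3).choose 2 = (k+3) + (k+3).choose 2 := by
      rw [show k+1+3 = (k+3)+1 by ring, Nat.choose_succ_succ' (k+3) 1, Nat.choose_one_right]
    have c3 : (k+1+3).choose 3 = (k+3).choose 2 + (k+3).choose 3 := by
      rw [show k+1+3 = (k+3)+1 by ring, Nat.choose_succ_succ' (k+3) 2]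
    have e1 := rec1 (k+3)
    have e2 := rec2 (k+3)
    rw [show k + 3 + 1 = k+1+3 by ring] at e1 e2
    rw [e2, e1, h2, h1, c2, c3]
    push_cast
    generalize (((k+3).choose 2 : ℕ) : ℤ) = C2
    generalize (((k+3).choose 3 : ℕ) : ℤ) = C3
    refine ⟨u * a + u * f + v * f + a^k * 3 * C3, u * f + v * a + a^k * 2 * C3, ?_, ?_⟩ <;> ring

theorem aux_mod4 (m : ℕ) : Nat.fib m % 4 = Nat.fib (m % 6) % 4 := by
  induction m using Nat.strong_induction_on with
  | _ m ih =>
    by_cases h : m < 6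
    · rw [Nat.mod_eq_of_lt h]
    · obtain ⟨k, rfl⟩ : ∃ k, m = k + 6 := ⟨m - 6, by omega⟩
      have := ih k (by omega)
      rw [Nat.add_mod_right, ← this]
      have h3 : Nat.fib (k+6) = 8 * Nat.fib (k+1) + 5 * Nat.fib k := by
        simp only [Nat.fib_add_two]; ring
      omega

theorem aux_mod3 (m : ℕ) : Nat.fib m % 3 = Nat.fib (m % 8) % 3 := by
  induction m using Nat.strong_induction_on with
  | _ m ih =>
    by_cases h : m < 8
    · rw [Nat.mod_eq_of_lt h]
    · obtain ⟨k, rfl⟩ : ∃ k, m = k + 8 := ⟨m - 8, by omega⟩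
      have := ih k (by omega)
      rw [Nat.add_mod_right, ← this]
      have h3 : Nat.fib (k+8) = 21 * Nat.fib (k+1) + 13 * Nat.fib k := by
        simp only [Nat.fib_add_two]; ring
      omega

theorem aux_choose2 (k : ℕ) : 2 * ((k.choose 2 : ℕ) : ℤ) = k * (k - 1) := by
  induction k with
  | zero => simp
  | succ k ih =>
    rw [Nat.choose_succ_succ' k 1, Nat.choose_one_right]; push_cast; linear_combination ih

theorem aux_choose3 (k : ℕ) : 6 * ((k.choose 3 : ℕ) : ℤ) = k * (k - 1) * (k - 2) := by
  induction k with
  | zero => simp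
  | succ k ih =>
    have := aux_choose2 k
    rw [Nat.choose_succ_succ' k 2]; push_cast; linear_combination ih + 3 * this

/-- Cassini -/
theorem aux_cassini (n : ℕ) :
    ((Nat.fib (n+1) : ℤ) - Nat.fib n)^2 + ((Nat.fib (n+1) : ℤ) - Nat.fib n) * Nat.fib n
      - (Nat.fib n : ℤ)^2 = (-1)^n := by
  induction n with
  | zero => simp
  | succ n ih =>
    rw [show n + 1 + 1 = n + 2 by ring, Nat.fib_add_two, pow_succ (-1 : ℤ) n, ← ih]; push_cast; ring

/-- Common part. -/
theorem aux_main (n : ℕ) (hn : 4 ≤ n) (f a : ℤ) (hf : f = Nat.fib n)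
    (ha : (Nat.fib (n+1) : ℤ) = f + a)
    (r : ℕ) (hr : r = Nat.fib (n * Nat.fib (n * Nat.fib n)) / Nat.fib n ^ 3) :
    ∃ (p q : ℕ) (m c d : ℤ), p + 3 = Nat.fib n ∧ q + 3 = Nat.fib (n * Nat.fib n) ∧
      (Nat.fib (n * Nat.fib n) : ℤ) = f^2 * m ∧
      m ≡ a^p * (a^2 + c * a) [ZMOD f] ∧ 2 * c = f * (f - 1) ∧
      (2 * d = f * m * (f^2 * m - 1)) ∧ (r : ℤ) ≡ a^q * (m * a^2 + d * a) [ZMOD f] := by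
  have hF : 3 ≤ Nat.fib n := by
    have : Nat.fib 4 ≤ Nat.fib n := Nat.fib_mono hn
    simpa [Nat.fib_add_two] using this
  have hK : 3 ≤ Nat.fib (n * Nat.fib n) := by
    have h4 : n ≤ n * Nat.fib n := Nat.le_mul_of_pos_right _ (by omega)
    exact hF.trans (Nat.fib_mono h4)
  obtain ⟨p, hp⟩ : ∃ p, p + 3 = Nat.fib n := ⟨_, Nat.sub_add_cancel hF⟩
  obtain ⟨q, hq⟩ : ∃ q, q + 3 = Nat.fib (n * Nat.fib n) := ⟨_, Nat.sub_add_cancel hK⟩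
  have hf0 : f ≠ 0 := by rw [hf]; norm_cast; omega
  obtain ⟨u, -, h1, -⟩ := aux_expand n f a hf ha p
  obtain ⟨u', -, h2, -⟩ := aux_expand n f a hf ha q
  have c1 := aux_choose2 (p+3)
  have c2 := aux_choose2 (q+3)
  have c3 := aux_choose3 (q+3)
  have hpf : (p:ℤ) + 3 = f := by rw [hf, ← hp]; push_cast; rfl
  have hqf : (q:ℤ) + 3 = (Nat.fib (n * Nat.fib n) : ℤ) := by rw [← hq]; push_cast; rfl
  push_cast at c1 c2 c3
  rw [hp] at h1
  rw [hpf] at c1 h1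
  rw [← hp] at h1
  set C1 : ℤ := (((p+3).choose 2 : ℕ) : ℤ)
  set C1' : ℤ := (((p+3).choose 3 : ℕ) : ℤ)
  set C2 : ℤ := (((q+3).choose 2 : ℕ) : ℤ)
  set C3 : ℤ := (((q+3).choose 3 : ℕ) : ℤ)
  obtain ⟨m, hm⟩ : ∃ m, m = a^p * (a^2 + C1 * a + 2 * C1' * f) + f^2 * u := ⟨_, rfl⟩
  have hKm : (Nat.fib (n * Nat.fib n) : ℤ) = f^2 * m := by
    rw [← hp, h1, hm]; ring
  rw [hqf, hKm] at c2 c3 h2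
  -- d
  obtain ⟨d, hd⟩ : ∃ d, C2 = f * d := by
    rcases Int.even_or_odd' f with ⟨h, hh | hh⟩
    · refine ⟨h * m * (f^2*m-1), ?_⟩
      have : 2 * C2 = 2 * (f * (h * m * (f^2*m-1))) := by
        rw [c2]; linear_combination f * m * (f^2*m-1) * hh
      linarith
    · have : f ∣ 2 * C2 := by rw [c2]; exact ⟨f * m * (f^2*m-1), by ring⟩
      have hc : IsCoprime f 2 := ⟨1, -h, by rw [hh]; ring⟩
      exact hc.dvd_of_dvd_mul_left this
  have hd2 : 2 * d = f * m * (f^2*m-1) := by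
    apply mul_left_cancel₀ hf0
    rw [hd] at c2
    linear_combination c2
  obtain ⟨e, he⟩ : f ∣ 2 * C3 := by
    have h33 : 3 * (2 * C3) = f^2 * m * (f^2*m-1) * (f^2*m-2) := by rw [← c3]; ring
    by_cases h3 : (3:ℤ) ∣ f
    · obtain ⟨g, hg⟩ := h3
      refine ⟨g * m * (f^2*m-1) * (f^2*m-2), ?_⟩
      have : 3 * (2 * C3) = 3 * (f * (g * m * (f^2*m-1) * (f^2*m-2))) := by
        rw [h33]; linear_combination f * m * (f^2*m-1) * (f^2*m-2) * hg
      linarith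
    · have hc : IsCoprime f 3 := by
        exact ((Int.prime_three.coprime_iff_not_dvd).2 h3).symm
      refine hc.dvd_of_dvd_mul_left ?_
      rw [h33]
      exact ⟨f * m * (f^2*m-1) * (f^2*m-2), by ring⟩
  have hbig : (Nat.fib (n * Nat.fib (n * Nat.fib n)) : ℤ) =
      f^3 * (a^q * (m * a^2 + d * a) + f * (a^q * e + u')) := by
    rw [← hq, h2, hd, he]; ring
  have hrz : (r : ℤ) = a^q * (m * a^2 + d * a) + f * (a^q * e + u') := by
    rw [hr]; push_cast; rw [hbig, ← hf]
    exact Int.mul_ediv_cancel_left _ (pow_ne_zero _ hf0)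
  refine ⟨p, q, m, C1, d, hp, hq, hKm, ?_, ?_, hd2, ?_⟩
  · rw [hm]
    apply Int.ModEq.symm
    rw [Int.modEq_iff_dvd]
    exact ⟨a^p * (2 * C1') + f * u, by ring⟩
  · exact c1
  · rw [hrz]
    apply Int.ModEq.symm
    rw [Int.modEq_iff_dvd]
    exact ⟨(a^q * e + u'), by ring⟩

theorem aux_odd (n : ℕ) (hn : 4 ≤ n) (h3 : ¬ 3 ∣ n) (f a : ℤ) (hf : f = Nat.fib n)
    (ha : (Nat.fib (n+1) : ℤ) = f + a)
    (r : ℕ) (hr : r = Nat.fib (n * Nat.fib (n * Nat.fib n)) / Nat.fib n ^ 3) :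
    ∃ (p q : ℕ), p + 3 = Nat.fib n ∧ q + 3 = Nat.fib (n * Nat.fib n) ∧
      (r : ℤ) ≡ a^(p+q+4) [ZMOD f] := by
  obtain ⟨p, q, m, c, d, hp, hq, hK, hm, hc, hd, hrr⟩ := aux_main n hn f a hf ha r hr
  refine ⟨p, q, hp, hq, ?_⟩
  have h2 : Nat.fib n % 2 = 1 := by
    have h := aux_mod4 n
    have : n % 6 = 1 ∨ n % 6 = 2 ∨ n % 6 = 4 ∨ n % 6 = 5 := by omega
    rcases this with h' | h' | h' | h' <;> rw [h'] at h <;> simp [Nat.fib_add_two] at h <;> omega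
  have hcop : IsCoprime f 2 := by
    refine ⟨1, -(f/2), ?_⟩
    have : f % 2 = 1 := by rw [hf]; omega
    omega
  have hc' : f ∣ c := hcop.dvd_of_dvd_mul_left (hc ▸ ⟨f-1, rfl⟩)
  have hd' : f ∣ d := hcop.dvd_of_dvd_mul_left (hd ▸ ⟨m * (f^2*m-1), by ring⟩)
  have hc0 : c ≡ 0 [ZMOD f] := (Int.modEq_zero_iff_dvd).2 hc'
  have hd0 : d ≡ 0 [ZMOD f] := (Int.modEq_zero_iff_dvd).2 hd'
  have hm2 : m ≡ a^p * (a^2 + 0 * a) [ZMOD f] := hm.trans (by gcongr)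
  have : (r:ℤ) ≡ a^q * ((a^p * (a^2 + 0 * a)) * a^2 + 0 * a) [ZMOD f] := hrr.trans (by gcongr)
  convert this using 1
  ring

theorem aux_even (n : ℕ) (hn : 4 ≤ n) (h3 : 3 ∣ n) (f a h : ℤ) (hf : f = Nat.fib n)
    (ha : (Nat.fib (n+1) : ℤ) = f + a) (hh : f = 2 * h)
    (r : ℕ) (hr : r = Nat.fib (n * Nat.fib (n * Nat.fib n)) / Nat.fib n ^ 3) :
    (r : ℤ) ≡ (-1)^n * (a - h)^2 [ZMOD f] := by
  obtain ⟨p, q, m, c, d, hp, hq, hK, hm, hc, hd, hrr⟩ := aux_main n hn f a hf ha r hr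
  have cas := aux_cassini n
  rw [ha, ← hf, add_sub_cancel_left] at cas
  have ha2 : a^2 ≡ (-1)^n [ZMOD f] := by
    rw [← cas, Int.modEq_iff_dvd]; exact ⟨a - f, by ring⟩
  -- multiples of h depend on parity only
  have hpar : ∀ x y : ℤ, x % 2 = y % 2 → h * x ≡ h * y [ZMOD f] := by
    intro x y hxy
    rw [hh, mul_comm 2 h]
    exact Int.ModEq.mul_left' hxy
  have hc' : c = h * (f - 1) := by
    have : 2 * c = 2 * (h * (f - 1)) := by rw [hc]; linear_combination (f-1) * hh
    linarith
  have hd' : d = h * (m * (f^2 * m - 1)) := by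
    have : 2 * d = 2 * (h * (m * (f^2 * m - 1))) := by
      rw [hd]; linear_combination (m * (f^2 * m - 1)) * hh
    linarith
  have hao : a % 2 = 1 := by
    have h1 := aux_mod4 n
    have h2 := aux_mod4 (n+1)
    have : n % 6 = 0 ∧ (n+1) % 6 = 1 ∨ n % 6 = 3 ∧ (n+1)%6 = 4 := by omega
    rcases this with ⟨h', h''⟩ | ⟨h', h''⟩ <;> rw [h'] at h1 <;> rw [h''] at h2 <;>
      simp [Nat.fib_add_two] at h1 h2 <;> omega
  have hodd : ∀ j : ℕ, a^j % 2 = 1 := by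
    intro j
    exact Int.odd_iff.1 ((Int.odd_iff.2 hao).pow)
  have hodd1 : (f - 1) % 2 = 1 := by omega
  have om : ∀ x y : ℤ, x % 2 = 1 → y % 2 = 1 → (x * y) % 2 = 1 := by
    intro x y hx hy
    exact Int.odd_iff.1 ((Int.odd_iff.2 hx).mul (Int.odd_iff.2 hy))
  have hm1 : m ≡ a^(p+2) + h [ZMOD f] := by
    refine hm.trans ?_
    rw [hc']
    have := hpar ((f-1) * a^(p+1)) 1 (by rw [om _ _ hodd1 (hodd _)]; rfl)
    have := Int.ModEq.add_left (a^(p+2)) this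
    convert this using 1 <;> ring
  have hr1 : (r:ℤ) ≡ a^(p+q+4) + h + h * m [ZMOD f] := by
    refine hrr.trans ?_
    have e1 : a^q * (m * a^2 + d * a) ≡ a^(q+2) * m + h * m [ZMOD f] := by
      rw [hd']
      have o : (f^2*m-1) % 2 = 1 := by
        have : f^2 * m - 1 = 2 * (h * f * m) - 1 := by linear_combination f * m * hh
        omega
      have := hpar (m * ((f^2*m-1) * a^(q+1))) m (by
        rw [Int.mul_emod, om _ _ o (hodd _)]; simp)
      have := Int.ModEq.add_left (a^(q+2) * m) this
      convert this using 1; ring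
    refine e1.trans (Int.ModEq.add_right _ ?_)
    have e2 : a^(q+2) * m ≡ a^(q+2) * (a^(p+2) + h) [ZMOD f] := Int.ModEq.mul_left _ hm1
    refine e2.trans ?_
    have := hpar (a^(q+2)) 1 (by rw [hodd]; rfl)
    have := Int.ModEq.add_left (a^(p+q+4)) this
    convert this using 1 <;> ring
  have hmpar : m % 2 = (1 + h) % 2 := by
    have h2f : (2:ℤ) ∣ f := ⟨h, hh⟩
    have t : m % 2 = (a^(p+2) + h) % 2 := hm1.of_dvd h2f
    have := hodd (p+2)
    omega
  have ht : (a - h)^2 ≡ a^2 + h * h [ZMOD f] := by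
    rw [Int.modEq_iff_dvd]; exact ⟨a, by rw [hh]; ring⟩
  have hK4 : 4 ∣ q + 3 := by
    have : (4:ℤ) ∣ ((q + 3 : ℕ) : ℤ) := by rw [hq, hK, hh]; exact ⟨h^2*m, by ring⟩
    exact_mod_cast this
  have m4 := aux_mod4 n
  have : n % 6 = 0 ∨ n % 6 = 3 := by omega
  rcases this with h6 | h6
  · rw [h6] at m4
    simp at m4
    have hev : Even n := by rw [Nat.even_iff]; omega
    rw [hev.neg_one_pow] at ha2 ⊢
    obtain ⟨s, hs⟩ : ∃ s, p + q + 4 = 2 * s := ⟨(p+q+4)/2, by omega⟩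
    have hhe : h % 2 = 0 := by omega
    have e1 : a^(p+q+4) ≡ 1 [ZMOD f] := by
      rw [hs, pow_mul]; simpa using ha2.pow s
    have e2 : h * m ≡ h * 1 [ZMOD f] := hpar _ _ (by omega)
    have e3 : h * h ≡ h * 0 [ZMOD f] := hpar _ _ (by omega)
    have e4 : h * 2 ≡ h * 0 [ZMOD f] := hpar _ _ (by omega)
    have L : (r:ℤ) ≡ 1 [ZMOD f] := by
      refine hr1.trans (((e1.add_right h).add e2).trans ?_)
      convert e4.add_left 1 using 1 <;> ring
    have R : (a-h)^2 ≡ 1 [ZMOD f] := by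
      refine ht.trans ((ha2.add e3).trans ?_)
      simp
    rw [one_mul]
    exact L.trans R.symm
  · rw [h6] at m4
    simp [Nat.fib_add_two] at m4
    have hod : Odd n := by rw [Nat.odd_iff]; omega
    rw [hod.neg_one_pow] at ha2 ⊢
    obtain ⟨s, hs⟩ : ∃ s, p + q + 4 = 2 * (2 * s) := ⟨(p+q+4)/4, by omega⟩
    have hhe : h % 2 = 1 := by omega
    have e1 : a^(p+q+4) ≡ 1 [ZMOD f] := by
      rw [hs, pow_mul]; simpa using ha2.pow (2*s)
    have e2 : h * m ≡ h * 0 [ZMOD f] := hpar _ _ (by omega)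
    have e3 : h * h ≡ h * (-1) [ZMOD f] := hpar _ _ (by omega)
    have L : (r:ℤ) ≡ 1 + h [ZMOD f] := by
      refine hr1.trans (((e1.add_right h).add e2).trans ?_)
      simp
    have R : (a-h)^2 ≡ -1 + h * (-1) [ZMOD f] := by
      exact ht.trans (ha2.add e3)
    have R2 := R.mul_left (-1)
    refine L.trans (Int.ModEq.trans ?_ R2.symm)
    have : (-1:ℤ) * (-1 + h * (-1)) = 1 + h := by ring
    rw [this]

theorem aux_oddcase4 (n : ℕ) (h3 : ¬ 3 ∣ n) (h4 : ¬ 4 ∣ n) : ¬ 3 ∣ n * Nat.fib n := by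
  intro h
  rcases (Nat.Prime.dvd_mul Nat.prime_three).1 h with h | h
  · exact h3 h
  · have m3 := aux_mod3 n
    have : n % 8 = 1 ∨ n % 8 = 2 ∨ n % 8 = 3 ∨ n % 8 = 5 ∨ n % 8 = 6 ∨ n % 8 = 7 := by omega
    rcases this with h' | h' | h' | h' | h' | h' <;> rw [h'] at m3 <;>
      simp [Nat.fib_add_two] at m3 <;> omega

theorem stmt_8 (n : ℕ) (hn : 3 ≤ n)
    (r : ℕ) (hr : r = Nat.fib (n * Nat.fib (n * Nat.fib n)) / Nat.fib n ^ 3) :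
    (¬ (3 ∣ n) → ¬ (4 ∣ n) → r ≡ 1 [MOD Nat.fib n]) ∧
    (¬ (3 ∣ n) → 4 ∣ n → r ≡ Nat.fib (n - 1) [MOD Nat.fib n]) ∧
    (3 ∣ n →
      (r : ℤ) ≡ (-1) ^ n * ((Nat.fib (n - 3) / 2 : ℕ) : ℤ) ^ 2 [ZMOD (Nat.fib n : ℤ)]) := by
  have haz : (Nat.fib (n+1) : ℤ) = (Nat.fib n : ℤ) + (Nat.fib (n-1) : ℤ) := by
    rw [Nat.fib_add_one (by omega)]; push_cast; ring
  have cas := aux_cassini n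
  rw [haz, add_sub_cancel_left] at cas
  have ha2 : (Nat.fib (n-1) : ℤ)^2 ≡ (-1)^n [ZMOD (Nat.fib n : ℤ)] := by
    rw [← cas, Int.modEq_iff_dvd]; exact ⟨(Nat.fib (n-1) : ℤ) - Nat.fib n, by ring⟩
  refine ⟨?_, ?_, ?_⟩
  · intro h3 h4
    obtain ⟨p, q, hp, hq, h⟩ := aux_odd n (by omega) h3 _ _ rfl haz r hr
    rw [← Int.natCast_modEq_iff]
    refine h.trans ?_
    have h3' := aux_oddcase4 n h3 h4
    have m1 := aux_mod4 n
    have m2 := aux_mod4 (n * Nat.fib n)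
    rcases Nat.even_or_odd n with he | ho
    · rw [he.neg_one_pow] at ha2
      have o1 : Nat.fib n % 2 = 1 := by
        have : n % 6 = 1 ∨ n % 6 = 2 ∨ n % 6 = 4 ∨ n % 6 = 5 := by omega
        rcases this with h' | h' | h' | h' <;> rw [h'] at m1 <;> simp [Nat.fib_add_two] at m1 <;> omega
      have o2 : Nat.fib (n * Nat.fib n) % 2 = 1 := by
        generalize n * Nat.fib n = t at *
        have : t % 6 = 1 ∨ t % 6 = 2 ∨ t % 6 = 4 ∨ t % 6 = 5 := by omega
        rcases this with h' | h' | h' | h' <;> rw [h'] at m2 <;> simp [Nat.fib_add_two] at m2 <;> omega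
      obtain ⟨s, hs⟩ : ∃ s, p + q + 4 = 2 * s := ⟨(p+q+4)/2, by omega⟩
      rw [hs, pow_mul]; simpa using ha2.pow s
    · rw [ho.neg_one_pow] at ha2
      have hn2 : n % 2 = 1 := Nat.odd_iff.1 ho
      have o1 : Nat.fib n % 4 = 1 := by
        have : n % 6 = 1 ∨ n % 6 = 5 := by omega
        rcases this with h' | h' <;> rw [h'] at m1 <;> simp [Nat.fib_add_two] at m1 <;> omega
      have o2 : Nat.fib (n * Nat.fib n) % 4 = 1 := by
        have ht : (n * Nat.fib n) % 2 = 1 :=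
          Nat.odd_iff.1 (ho.mul (Nat.odd_iff.2 (by omega)))
        generalize n * Nat.fib n = t at *
        have : t % 6 = 1 ∨ t % 6 = 5 := by omega
        rcases this with h' | h' <;> rw [h'] at m2 <;> simp [Nat.fib_add_two] at m2 <;> omega
      obtain ⟨s, hs⟩ : ∃ s, p + q + 4 = 2 * (2 * s) := ⟨(p+q+4)/4, by omega⟩
      rw [hs, pow_mul]; simpa using ha2.pow (2*s)
  · intro h3 h4
    obtain ⟨p, q, hp, hq, h⟩ := aux_odd n (by omega) h3 _ _ rfl haz r hr
    rw [← Int.natCast_modEq_iff]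
    refine h.trans ?_
    have m1 := aux_mod4 n
    have m2 := aux_mod4 (n * Nat.fib n)
    have m3 := aux_mod3 n
    have he : Even n := by rw [Nat.even_iff]; omega
    rw [he.neg_one_pow] at ha2
    have o1 : Nat.fib n % 2 = 1 := by
      have : n % 6 = 1 ∨ n % 6 = 2 ∨ n % 6 = 4 ∨ n % 6 = 5 := by omega
      rcases this with h' | h' | h' | h' <;> rw [h'] at m1 <;> simp [Nat.fib_add_two] at m1 <;> omega
    have d3 : 3 ∣ Nat.fib n := by
      have : n % 8 = 0 ∨ n % 8 = 4 := by omega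
      rcases this with h' | h' <;> rw [h'] at m3 <;> simp [Nat.fib_add_two] at m3 <;> omega
    have o2 : Nat.fib (n * Nat.fib n) % 2 = 0 := by
      have d3' : 3 ∣ n * Nat.fib n := d3.mul_left n
      generalize n * Nat.fib n = t at *
      have : t % 6 = 0 ∨ t % 6 = 3 := by omega
      rcases this with h' | h' <;> rw [h'] at m2 <;> simp [Nat.fib_add_two] at m2 <;> omega
    obtain ⟨s, hs⟩ : ∃ s, p + q + 4 = 2 * s + 1 := ⟨(p+q+4)/2, by omega⟩
    rw [hs, pow_succ, pow_mul]
    simpa using (ha2.pow s).mul_right (Nat.fib (n-1) : ℤ)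
  · intro h3
    by_cases h : n = 3
    · subst h
      have e1 : Nat.fib 3 = 2 := by norm_num [Nat.fib_add_two]
      have e2 : Nat.fib (3 * 2) = 8 := by norm_num [Nat.fib_add_two]
      have e3 : Nat.fib (3 * 8) = 46368 := by norm_num [Nat.fib_add_two]
      rw [e1, e2, e3] at hr
      rw [e1, hr]
      decide
    · have m1 := aux_mod4 n
      have o1 : Nat.fib n % 2 = 0 := by
        have : n % 6 = 0 ∨ n % 6 = 3 := by omega
        rcases this with h' | h' <;> rw [h'] at m1 <;> simp [Nat.fib_add_two] at m1 <;> omega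
      have key := aux_even n (by omega) h3 _ _ ((Nat.fib n / 2 : ℕ) : ℤ) rfl haz (by omega) r hr
      have e : ((Nat.fib (n - 3) / 2 : ℕ) : ℤ) = (Nat.fib (n-1) : ℤ) - ((Nat.fib n / 2 : ℕ) : ℤ) := by
        obtain ⟨k, rfl⟩ : ∃ k, n = k + 3 := ⟨n - 3, by omega⟩
        have g1 : Nat.fib (k+3) = _ := Nat.fib_add_two
        have g2 : Nat.fib (k+2) = _ := Nat.fib_add_two
        simp only [show k + 3 - 3 = k by omega, show k + 3 - 1 = k+2 by omega]
        simp only [show k + 1 + 1 = k + 2 by omega] at g1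
        omega
      rw [e]
      exact key
end

section
/- For all positive integers n, r, and s, if F_n^{s-1} divides r, then F_n^s divides F_{n·r}. -/
theorem fib_mul_expand_s9 (m : ℕ) (k : ℕ) : ∃ a b : ℤ,
    (Nat.fib ((m + 1) * (k + 1)) : ℤ)
      = Nat.fib (m + 1) * (k + 1) * (Nat.fib (m + 2) : ℤ) ^ k + (Nat.fib (m + 1) : ℤ) ^ 2 * a ∧
    (Nat.fib ((m + 1) * (k + 1) + 1) : ℤ)
      = (Nat.fib (m + 2) : ℤ) ^ (k + 1) + Nat.fib (m + 1) * b := by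
  have hm : (Nat.fib (m + 2) : ℤ) = Nat.fib m + Nat.fib (m + 1) := by
    exact_mod_cast Nat.fib_add_two
  induction k with
  | zero => exact ⟨0, 0, by simp, by simp⟩
  | succ k ih =>
    obtain ⟨a, b, h1, h2⟩ := ih
    have e1 : (Nat.fib ((m + 1) * (k + 1 + 1)) : ℤ)
        = Nat.fib ((m + 1) * (k + 1)) * Nat.fib m
          + Nat.fib ((m + 1) * (k + 1) + 1) * Nat.fib (m + 1) := by
      exact_mod_cast Nat.fib_add ((m + 1) * (k + 1)) m
    have e2 : (Nat.fib ((m + 1) * (k + 1 + 1) + 1) : ℤ)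
        = Nat.fib ((m + 1) * (k + 1)) * Nat.fib (m + 1)
          + Nat.fib ((m + 1) * (k + 1) + 1) * Nat.fib (m + 2) := by
      exact_mod_cast Nat.fib_add ((m + 1) * (k + 1)) (m + 1)
    have h0 : (Nat.fib m : ℤ) = Nat.fib (m + 2) - Nat.fib (m + 1) := by linarith
    refine ⟨a * (Nat.fib (m + 2) - Nat.fib (m + 1)) - (k + 1) * (Nat.fib (m + 2) : ℤ) ^ k + b,
      Nat.fib ((m + 1) * (k + 1)) + Nat.fib (m + 2) * b, ?_, ?_⟩
    · rw [e1, h1, h2, h0]; push_cast; ring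
    · rw [e2, h2]; ring

theorem fib_mul_dvd (m d : ℕ) (h : d ∣ Nat.fib m) : Nat.fib m * d ∣ Nat.fib (m * d) := by
  rcases m with _ | m
  · simp
  rcases d with _ | k
  · simp
  obtain ⟨a, b, h1, -⟩ := fib_mul_expand_s9 m k
  obtain ⟨c, hc⟩ := h
  have hc' : (Nat.fib (m + 1) : ℤ) = (k + 1) * c := by exact_mod_cast hc
  rw [← Int.natCast_dvd_natCast, h1]
  refine ⟨(Nat.fib (m + 2) : ℤ) ^ k + c * a, ?_⟩
  push_cast
  linear_combination (Nat.fib (m + 1) : ℤ) * a * hc'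

theorem fib_pow_dvd (n t : ℕ) : Nat.fib n ^ (t + 1) ∣ Nat.fib (n * Nat.fib n ^ t) := by
  induction t with
  | zero => simp
  | succ t ih =>
    have h := fib_mul_dvd (n * Nat.fib n ^ t) (Nat.fib n) ((dvd_pow_self _ (by omega)).trans ih)
    rw [pow_succ, pow_succ (Nat.fib n) t, ← mul_assoc n, ← pow_succ]
    exact (Nat.mul_dvd_mul_right ih _).trans h

theorem stmt_9 (n r s : ℕ) (hn : 1 ≤ n) (hr : 1 ≤ r) (hs : 1 ≤ s)
    (h : Nat.fib n ^ (s - 1) ∣ r) : Nat.fib n ^ s ∣ Nat.fib (n * r) := by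
  obtain ⟨t, rfl⟩ : ∃ t, s = t + 1 := ⟨s - 1, by omega⟩
  exact (fib_pow_dvd n t).trans (Nat.fib_dvd _ _ (Nat.mul_dvd_mul_left n h))
end
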